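/- Let (X,d) be a metric space, M a nonempty proper closed subset of X, and F : X∖M → (0,∞) a 1-Lipschitz function. Then the metric j(x,y) = (1/2)·log((1 + d(x,y)/F(x))·(1 + d(x,y)/F(y))) on X∖M is Gromov hyperbolic with Gromov constant δ ≤ (1/4)·log 24; that is, for all x,y,z,w ∈ X∖M, j(x,z) + j(y,w) ≤ max{ j(x,w) + j(y,z), j(x,y) + j(z,w) } + (1/2)·log 24. -/

import Mathlib

open Real Filter

/-- Generalized Gehring–Osgood function. -/
noncomputable def jGO {X : Type*} [MetricSpace X] (F : X → ℝ) (x y : X) : ℝ :=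
  (1 / 2) * Real.log ((1 + dist x y / F x) * (1 + dist x y / F y))

theorem aux_key (A R T C : ℝ) (hA : 0 < A) (hR : 0 < R) (hT : 0 < T) (hC : 0 < C)
    (h : A * R ≤ T * C) (h1 : A ≤ 2 * R) (h2 : R ≤ 2 * A) (h3 : T ≤ 2 * C) (h4 : C ≤ 2 * T) :
    (A + T) * (C + R) ≤ 9 / 2 * (T * C) := by
  have hS : 0 < T * C := by positivity
  have hp0 : 0 < A * C := by positivity
  have hq0 : 0 < T * R := by positivity
  have hA2 : A ^ 2 ≤ 2 * (T * C) := by nlinarith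
  have hR2 : R ^ 2 ≤ 2 * (T * C) := by nlinarith
  have hT2 : T ^ 2 ≤ 2 * (T * C) := by nlinarith
  have hC2 : C ^ 2 ≤ 2 * (T * C) := by nlinarith
  have hp : A * C ≤ 2 * (T * C) := by nlinarith [sq_nonneg (A - C)]
  have hq : T * R ≤ 2 * (T * C) := by nlinarith [sq_nonneg (T - R)]
  have hpq : (A * C) * (T * R) ≤ (T * C) * (T * C) := by
    have := mul_le_mul_of_nonneg_left h hS.le
    nlinarith
  have hsum : A * C + T * R ≤ 5 / 2 * (T * C) := by
    generalize A * C = p at *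
    generalize T * R = q at *
    generalize T * C = S at *
    rcases le_total p (S / 2) with hc | hc
    · linarith
    · have h5 : 0 ≤ (2 * S - p) * (p - S / 2) := mul_nonneg (by linarith) (by linarith)
      have h6 : p * (p + q) ≤ p * (5 / 2 * S) := by nlinarith
      exact le_of_mul_le_mul_left h6 hp0
  nlinarith

theorem aux_P {a b c r t e : ℝ} (ha : 0 < a) (hb : 0 < b) (hc : 0 < c)
    (hr : 0 ≤ r) (ht : 0 ≤ t) (he : 0 ≤ e) (het : e ≤ r + t)
    (hab : |a - b| ≤ r) (hbc : |b - c| ≤ t)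
    (h : (a + r) * (b + r) ≤ (b + t) * (c + t)) :
    (a + e) * (c + e) ≤ 9 / 2 * ((b + t) * (c + t)) := by
  rw [abs_le] at hab hbc
  have := aux_key (a + r) (b + r) (b + t) (c + t) (by linarith) (by linarith) (by linarith)
    (by linarith) h (by linarith) (by linarith) (by linarith) (by linarith)
  refine le_trans ?_ this
  exact mul_le_mul (by linarith) (by linarith) (by linarith) (by linarith)

/-- The product after clearing denominators. -/
noncomputable def PP {X : Type*} [MetricSpace X] (F : X → ℝ) (x y : X) : ℝ :=
  (F x + dist x y) * (F y + dist x y)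

theorem PP_comm {X : Type*} [MetricSpace X] (F : X → ℝ) (x y : X) : PP F x y = PP F y x := by
  unfold PP; rw [dist_comm y x]; ring

theorem PP_pos {X : Type*} [MetricSpace X] (F : X → ℝ) {x y : X} (hx : 0 < F x) (hy : 0 < F y) :
    0 < PP F x y := by
  unfold PP; positivity

theorem jGO_eq {X : Type*} [MetricSpace X] (F : X → ℝ) {x y : X} (hx : 0 < F x) (hy : 0 < F y) :
    jGO F x y = (1 / 2) * (Real.log (PP F x y) - Real.log (F x) - Real.log (F y)) := by
  have h := PP_pos F hx hy
  unfold jGO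
  rw [← Real.log_div h.ne' hx.ne', ← Real.log_div (by positivity) hy.ne']
  congr 2
  unfold PP
  field_simp

theorem PP_step {X : Type*} [MetricSpace X] (M : Set X)
    (F : X → ℝ) (hFpos : ∀ x ∉ M, 0 < F x)
    (hFlip : ∀ x ∉ M, ∀ y ∉ M, |F x - F y| ≤ dist x y)
    {x y z : X} (hx : x ∉ M) (hy : y ∉ M) (hz : z ∉ M) (h : PP F x y ≤ PP F y z) :
    PP F x z ≤ 9 / 2 * PP F y z :=
  aux_P (hFpos x hx) (hFpos y hy) (hFpos z hz) dist_nonneg dist_nonneg dist_nonneg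
    (dist_triangle x y z) (hFlip x hx y hy) (hFlip y hy z hz) h

theorem aux_mul {p q u v : ℝ} (hp : 0 < p) (hq : 0 < q) (hu : 0 < u) (hv : 0 < v)
    (h1 : p ≤ 9 / 2 * u) (h2 : q ≤ 9 / 2 * v) :
    Real.log p + Real.log q ≤ Real.log u + Real.log v + Real.log 24 := by
  rw [← Real.log_mul hp.ne' hq.ne', ← Real.log_mul hu.ne' hv.ne',
    ← Real.log_mul (by positivity) (by norm_num)]
  apply Real.log_le_log (by positivity)
  have := mul_le_mul h1 h2 hq.le (by positivity)
  nlinarith [mul_pos hu hv]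

theorem stmt_2 {X : Type*} [MetricSpace X] (M : Set X)
    (hMclosed : IsClosed M) (hMne : M.Nonempty) (hMproper : M ≠ Set.univ)
    (F : X → ℝ) (hFpos : ∀ x ∉ M, 0 < F x)
    (hFlip : ∀ x ∉ M, ∀ y ∉ M, |F x - F y| ≤ dist x y) :
    ∀ x ∉ M, ∀ y ∉ M, ∀ z ∉ M, ∀ w ∉ M,
      jGO F x z + jGO F y w ≤
        max (jGO F x w + jGO F y z) (jGO F x y + jGO F z w) + (1 / 2) * Real.log 24 := by
  intro x hx y hy z hz w hw
  have fx := hFpos x hx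
  have fy := hFpos y hy
  have fz := hFpos z hz
  have fw := hFpos w hw
  have S : ∀ {x y z : X}, x ∉ M → y ∉ M → z ∉ M → PP F x y ≤ PP F y z →
      PP F x z ≤ 9 / 2 * PP F y z := fun h1 h2 h3 h => PP_step M F hFpos hFlip h1 h2 h3 h
  have c1 := PP_comm F x y
  have c2 := PP_comm F y z
  have c3 := PP_comm F z w
  have c4 := PP_comm F x w
  have c5 := PP_comm F x z
  have c6 := PP_comm F y w
  have key : Real.log (PP F x z) + Real.log (PP F y w)
        ≤ Real.log (PP F x w) + Real.log (PP F y z) + Real.log 24 ∨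
      Real.log (PP F x z) + Real.log (PP F y w)
        ≤ Real.log (PP F x y) + Real.log (PP F z w) + Real.log 24 := by
    have A := @aux_mul (PP F x z) (PP F y w) (PP F x w) (PP F y z) (PP_pos F fx fz)
      (PP_pos F fy fw) (PP_pos F fx fw) (PP_pos F fy fz)
    have A' := @aux_mul (PP F y w) (PP F x z) (PP F x w) (PP F y z) (PP_pos F fy fw)
      (PP_pos F fx fz) (PP_pos F fx fw) (PP_pos F fy fz)
    have B := @aux_mul (PP F x z) (PP F y w) (PP F x y) (PP F z w) (PP_pos F fx fz)
      (PP_pos F fy fw) (PP_pos F fx fy) (PP_pos F fz fw)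
    have B' := @aux_mul (PP F y w) (PP F x z) (PP F x y) (PP F z w) (PP_pos F fy fw)
      (PP_pos F fx fz) (PP_pos F fx fy) (PP_pos F fz fw)
    rcases le_total (min (PP F x y) (PP F z w)) (min (PP F x w) (PP F y z)) with h | h
    · left
      rw [le_min_iff] at h
      rcases le_total (PP F x y) (PP F z w) with h' | h'
      · rw [min_eq_left h'] at h
        have s1 := S hx hy hz (by linarith)
        have s2 := S hy hx hw (by linarith)
        linarith [A' s2 s1]
      · rw [min_eq_right h'] at h
        have s1 := S hz hw hx (by linarith)
        have s2 := S hw hz hy (by linarith)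
        linarith [A (by linarith) (by linarith)]
    · right
      rw [le_min_iff] at h
      rcases le_total (PP F x w) (PP F y z) with h' | h'
      · rw [min_eq_left h'] at h
        have s1 := S hx hw hz (by linarith)
        have s2 := S hw hx hy (by linarith)
        linarith [B' (by linarith) (by linarith)]
      · rw [min_eq_right h'] at h
        have s1 := S hy hz hw (by linarith)
        have s2 := S hz hy hx (by linarith)
        linarith [B (by linarith) (by linarith)]
  rw [jGO_eq F fx fz, jGO_eq F fy fw, jGO_eq F fx fw, jGO_eq F fy fz, jGO_eq F fx fy,
    jGO_eq F fz fw]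
  rcases key with k | k
  · refine le_trans ?_ (add_le_add_left (le_max_left _ _) _)
    linarith
  · refine le_trans ?_ (add_le_add_left (le_max_right _ _) _)
    linarith
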